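/- arXiv:math/0411588 — 2 statements merged into one kernel-verified Lean document; each statement's English description precedes it below -/
import Mathlib

section
/- In the ring B_A one has q_k · q̄_k = 1 for every 1 ≤ k ≤ m; in particular the images of q_k and q̄_k are units of B_A, inverse to one another. -/
open MvPolynomial

/-- The polynomials `q_k` of Definition 3, defined inductively from a strictly upper
triangular integer matrix `A` (indices `0,…,m-1` correspond to the paper's `1,…,m`). -/
noncomputable def qpol {m : ℕ} (A : Fin m → Fin m → ℤ) : Fin m → MvPolynomial (Fin m) ℤ
  | k =>
    ∏ i ∈ (Finset.Iio k).attach,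
      ((X i.1 + 1) ^ (A i.1 k).toNat * (-(qpol A i.1 * X i.1) + 1) ^ (-(A i.1 k)).toNat)
  termination_by k => (k : ℕ)
  decreasing_by exact Fin.lt_iff_val_lt_val.mp (Finset.mem_Iio.mp i.2)

/-- The polynomials `q̄_k` of Definition 3. -/
noncomputable def qbar {m : ℕ} (A : Fin m → Fin m → ℤ) (k : Fin m) : MvPolynomial (Fin m) ℤ :=
  ∏ i ∈ Finset.Iio k,
    ((-(qpol A i * X i) + 1) ^ (A i k).toNat * (X i + 1) ^ (-(A i k)).toNat)

/-- The ideal `⟨y_k² − (q̄_k − 1)·y_k : 1 ≤ k ≤ m⟩` of `ℤ[y₁,…,y_m]`. -/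
noncomputable def relIdeal {m : ℕ} (A : Fin m → Fin m → ℤ) : Ideal (MvPolynomial (Fin m) ℤ) :=
  Ideal.span (Set.range fun k : Fin m => X k ^ 2 - (qbar A k - 1) * X k)

/-- The quotient ring `B_A = ℤ[y₁,…,y_m]/⟨y_k² − (q̄_k − 1)·y_k⟩`. -/
abbrev BA {m : ℕ} (A : Fin m → Fin m → ℤ) :=
  MvPolynomial (Fin m) ℤ ⧸ relIdeal A

/-- The class `y_I ∈ B_A` of the squarefree monomial `∏_{i ∈ I} y_i`. -/
noncomputable def yI {m : ℕ} (A : Fin m → Fin m → ℤ) (I : Finset (Fin m)) : BA A :=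
  Ideal.Quotient.mk (relIdeal A) (∏ i ∈ I, X i)

theorem qpol_eq_prod {m : ℕ} (A : Fin m → Fin m → ℤ) (k : Fin m) :
    qpol A k = ∏ i ∈ Finset.Iio k,
      ((X i + 1) ^ (A i k).toNat * (-(qpol A i * X i) + 1) ^ (-(A i k)).toNat) := by
  rw [qpol]
  exact Finset.prod_attach (Finset.Iio k) fun i =>
    (X i + 1) ^ (A i k).toNat * (-(qpol A i * X i) + 1) ^ (-(A i k)).toNat

theorem mk_X_sq {m : ℕ} (A : Fin m → Fin m → ℤ) (k : Fin m) :
    Ideal.Quotient.mk (relIdeal A) (X k) ^ 2 =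
      (Ideal.Quotient.mk (relIdeal A) (qbar A k) - 1) * Ideal.Quotient.mk (relIdeal A) (X k) := by
  have h : Ideal.Quotient.mk (relIdeal A) (X k ^ 2) =
      Ideal.Quotient.mk (relIdeal A) ((qbar A k - 1) * X k) :=
    Ideal.Quotient.eq.mpr (Ideal.subset_span ⟨k, rfl⟩)
  simpa only [map_pow, map_mul, map_sub, map_one] using h

theorem mk_qpol_mul_mk_qbar {m : ℕ} (A : Fin m → Fin m → ℤ) (k : Fin m) :
    Ideal.Quotient.mk (relIdeal A) (qpol A k) *
      Ideal.Quotient.mk (relIdeal A) (qbar A k) = 1 := by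
  induction k using WellFoundedLT.induction with
  | ind k ih =>
    rw [qpol_eq_prod, qbar, ← map_mul, ← Finset.prod_mul_distrib, map_prod]
    refine Finset.prod_eq_one fun i hi => ?_
    have hq := ih i (Finset.mem_Iio.mp hi)
    have hy := mk_X_sq A i
    have hinv : Ideal.Quotient.mk (relIdeal A) ((X i + 1) * (-(qpol A i * X i) + 1)) = 1 := by
      simp only [map_mul, map_add, map_neg, map_one]
      linear_combination (-Ideal.Quotient.mk (relIdeal A) (qpol A i)) * hy -
        Ideal.Quotient.mk (relIdeal A) (X i) * hq
    rw [mul_mul_mul_comm, mul_comm (_ ^ (-(A i k)).toNat), ← mul_pow, ← mul_pow, map_mul,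
      map_pow, map_pow, hinv, one_pow, one_pow, one_mul]

/-- In the ring `B_A` one has `q_k · q̄_k = 1` for every `k`; in particular the images
of `q_k` and `q̄_k` are units of `B_A`, inverse to one another. -/
theorem stmt2 {m : ℕ} (hm : 0 < m) (A : Fin m → Fin m → ℤ)
    (hA : ∀ i j : Fin m, j ≤ i → A i j = 0) (k : Fin m) :
    Ideal.Quotient.mk (relIdeal A) (qpol A k) * Ideal.Quotient.mk (relIdeal A) (qbar A k) = 1 ∧
    IsUnit (Ideal.Quotient.mk (relIdeal A) (qpol A k)) ∧
    IsUnit (Ideal.Quotient.mk (relIdeal A) (qbar A k)) := by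
  have h := mk_qpol_mul_mk_qbar A k
  exact ⟨h, .of_mul_eq_one _ h, .of_mul_eq_one_right _ h⟩
end

section
/- For every f ∈ ℤ[y₁,…,y_m], if the image of f in B_A is written in its unique expansion Σ_{I ⊆ {1,…,m}} a_I(f)·y_I with a_I(f) ∈ ℤ, then the top coefficient satisfies a_{{1,…,m}}(f) = Δ_A(f_{(m)}). -/
open MvPolynomial

/-- `f_{(n)}`: the sum of the monomials of `f` of total degree at most `n`. -/
noncomputable def trunc {σ : Type*} (n : ℕ) (f : MvPolynomial σ ℤ) : MvPolynomial σ ℤ :=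
  ∑ d ∈ f.support.filter (fun d => (d.sum fun _ e => e) ≤ n),
    monomial d (coeff d f)

/-- The coefficient `h_n ∈ ℤ[y₁,…,ŷ_k,…,y_m]` of `y_k^n` in the expansion of `f`
in powers of `y_k`. -/
noncomputable def coeffOf {m : ℕ} (k : Fin m) (n : ℕ) (f : MvPolynomial (Fin m) ℤ) :
    MvPolynomial (Fin m) ℤ :=
  ∑ d ∈ f.support.filter (fun d => d k = n), monomial (d.erase k) (coeff d f)

/-- The operator `D_{k-1}` of Definition 4 (`k : Fin m` corresponds to the paper's
`k+1`): writing `f = h₀ + h₁ y_k + ⋯`, set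
`D(f) = [h₁ + h₂(q̄_k − 1) + ⋯]_{(k)}`. -/
noncomputable def Dop {m : ℕ} (A : Fin m → Fin m → ℤ) (k : Fin m)
    (f : MvPolynomial (Fin m) ℤ) : MvPolynomial (Fin m) ℤ :=
  trunc (k : ℕ)
    (∑ n ∈ Finset.Icc 1 ((k : ℕ) + 1), coeffOf k n f * (qbar A k - 1) ^ (n - 1))

/-- Auxiliary iteration: `DeltaAux A j = D₀ ∘ D₁ ∘ ⋯ ∘ D_{j-1}`. -/
noncomputable def DeltaAux {m : ℕ} (A : Fin m → Fin m → ℤ) :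
    ℕ → MvPolynomial (Fin m) ℤ → MvPolynomial (Fin m) ℤ
  | 0, f => f
  | j + 1, f => DeltaAux A j (if h : j < m then Dop A ⟨j, h⟩ f else f)

/-- The operator `Δ_A = D₀ ∘ D₁ ∘ ⋯ ∘ D_{m−1} : ℤ[y₁,…,y_m]_{(m)} → ℤ`. -/
noncomputable def Delta {m : ℕ} (A : Fin m → Fin m → ℤ) (f : MvPolynomial (Fin m) ℤ) : ℤ :=
  MvPolynomial.coeff 0 (DeltaAux A m f)

lemma qpol_mem_supported {m : ℕ} (A : Fin m → Fin m → ℤ) (k : Fin m) :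
    qpol A k ∈ supported ℤ (Set.Iio k) := by
  induction k using WellFoundedLT.induction with
  | ind k ih =>
    rw [qpol]
    refine Subalgebra.prod_mem _ fun i _ => ?_
    have hi : i.1 < k := Finset.mem_Iio.mp i.2
    have hX : (X i.1 : MvPolynomial (Fin m) ℤ) ∈ supported ℤ (Set.Iio k) :=
      X_mem_supported.mpr hi
    have hq : qpol A i.1 ∈ supported ℤ (Set.Iio k) :=
      supported_mono (Set.Iio_subset_Iio hi.le) (ih _ hi)
    exact mul_mem (pow_mem (add_mem hX (one_mem _)) _)
      (pow_mem (add_mem (neg_mem (mul_mem hq hX)) (one_mem _)) _)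

lemma qbar_mem_supported {m : ℕ} (A : Fin m → Fin m → ℤ) (k : Fin m) :
    qbar A k ∈ supported ℤ (Set.Iio k) := by
  refine Subalgebra.prod_mem _ fun i hi => ?_
  replace hi : i < k := Finset.mem_Iio.mp hi
  have hX : (X i : MvPolynomial (Fin m) ℤ) ∈ supported ℤ (Set.Iio k) :=
    X_mem_supported.mpr hi
  have hq : qpol A i ∈ supported ℤ (Set.Iio k) :=
    supported_mono (Set.Iio_subset_Iio hi.le) (qpol_mem_supported A i)
  exact mul_mem (pow_mem (add_mem (neg_mem (mul_mem hq hX)) (one_mem _)) _)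
    (pow_mem (add_mem hX (one_mem _)) _)

lemma qbar_sub_one_mem_idealOfVars {m : ℕ} (A : Fin m → Fin m → ℤ) (k : Fin m) :
    qbar A k - 1 ∈ idealOfVars (Fin m) ℤ := by
  rw [← pow_one (idealOfVars (Fin m) ℤ), mem_pow_idealOfVars_iff']
  intro d hd
  obtain rfl : d = 0 := (Finsupp.degree_eq_zero_iff d).mp (by lia)
  rw [← constantCoeff_eq]
  simp [qbar]

lemma sub_trunc_mem_pow_idealOfVars {m : ℕ} (n : ℕ) (f : MvPolynomial (Fin m) ℤ) :
    f - trunc n f ∈ idealOfVars (Fin m) ℤ ^ (n + 1) := by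
  rw [mem_pow_idealOfVars_iff']
  intro d hd
  have hd' : (d.sum fun _ e => e) ≤ n := by
    rw [Finsupp.degree_apply] at hd
    exact Nat.lt_succ_iff.mp hd
  rw [coeff_sub, sub_eq_zero, trunc, coeff_sum]
  simp only [coeff_monomial]
  rw [Finset.sum_ite_eq']
  simp only [Finset.mem_filter, mem_support_iff, hd', and_true]
  split_ifs with h
  · rfl
  · exact not_not.mp h

/-- The divided difference `h₁ + h₂(q̄_k − 1) + ⋯` of `f = h₀ + h₁ y_k + ⋯`, without truncation. -/
noncomputable def divDiff {m : ℕ} (A : Fin m → Fin m → ℤ) (k : Fin m) :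
    MvPolynomial (Fin m) ℤ →ₗ[ℤ] MvPolynomial (Fin m) ℤ :=
  (basisMonomials (Fin m) ℤ).constr ℤ fun d =>
    if d k = 0 then 0 else monomial (d.erase k) 1 * (qbar A k - 1) ^ (d k - 1)

lemma divDiff_monomial {m : ℕ} (A : Fin m → Fin m → ℤ) (k : Fin m) (d : Fin m →₀ ℕ) (c : ℤ) :
    divDiff A k (monomial d c) =
      if d k = 0 then 0 else monomial (d.erase k) c * (qbar A k - 1) ^ (d k - 1) := by
  have h : monomial d c = c • basisMonomials (Fin m) ℤ d := by
    simp [coe_basisMonomials, smul_monomial]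
  rw [h, map_smul, divDiff, Module.Basis.constr_basis]
  split_ifs
  · simp
  · rw [← smul_mul_assoc, smul_monomial, smul_eq_mul, mul_one]

lemma divDiff_X_mul_monomial {m : ℕ} (A : Fin m → Fin m → ℤ) (k : Fin m) (d : Fin m →₀ ℕ)
    (c : ℤ) :
    divDiff A k (X k * monomial d c) = monomial (d.erase k) c * (qbar A k - 1) ^ d k := by
  rw [X, monomial_mul, divDiff_monomial]
  simp [Finsupp.erase_add]

lemma divDiff_mul {m : ℕ} (A : Fin m → Fin m → ℤ) (k : Fin m) {h : MvPolynomial (Fin m) ℤ}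
    (hh : h ∈ supported ℤ {k}ᶜ) (f : MvPolynomial (Fin m) ℤ) :
    divDiff A k (h * f) = h * divDiff A k f := by
  rw [supported_eq_adjoin_X] at hh
  induction hh using Algebra.adjoin_induction generalizing f with
  | mem x hx =>
    obtain ⟨i, hi, rfl⟩ := hx
    have hik : i ≠ k := hi
    induction f using MvPolynomial.induction_on' with
    | monomial d c =>
      rw [X, monomial_mul, divDiff_monomial, divDiff_monomial]
      simp only [Finsupp.add_apply, Finsupp.single_eq_of_ne hik.symm, zero_add, one_mul,
        Finsupp.erase_add, Finsupp.erase_single_ne hik.symm]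
      split_ifs
      · simp
      · rw [← mul_assoc, monomial_mul, one_mul]
    | add p q hp hq => rw [mul_add, map_add, hp, hq, map_add, mul_add]
  | algebraMap r => rw [algebraMap_eq, ← smul_eq_C_mul, ← smul_eq_C_mul, map_smul]
  | add x y _ _ hx hy => rw [add_mul, map_add, hx, hy, add_mul]
  | mul x y _ _ hx hy => rw [mul_assoc, hx, hy, mul_assoc]

lemma divDiff_one {m : ℕ} (A : Fin m → Fin m → ℤ) (k : Fin m) : divDiff A k 1 = 0 := by
  rw [← C_1, C_apply, divDiff_monomial]
  simp

lemma divDiff_eq_zero {m : ℕ} (A : Fin m → Fin m → ℤ) (k : Fin m) {h : MvPolynomial (Fin m) ℤ}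
    (hh : h ∈ supported ℤ {k}ᶜ) : divDiff A k h = 0 := by
  rw [← mul_one h, divDiff_mul A k hh, divDiff_one, mul_zero]

lemma divDiff_X_mul {m : ℕ} (A : Fin m → Fin m → ℤ) (k : Fin m) {h : MvPolynomial (Fin m) ℤ}
    (hh : h ∈ supported ℤ {k}ᶜ) : divDiff A k (X k * h) = h := by
  have h1 : divDiff A k (X k) = 1 := by
    rw [X, divDiff_monomial]
    simp
  rw [mul_comm, divDiff_mul A k hh, h1, mul_one]

lemma divDiff_mul_relation {m : ℕ} (A : Fin m → Fin m → ℤ) (k : Fin m)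
    (g : MvPolynomial (Fin m) ℤ) :
    divDiff A k ((X k ^ 2 - (qbar A k - 1) * X k) * g) = 0 := by
  have hq : qbar A k - 1 ∈ supported ℤ {k}ᶜ :=
    sub_mem (supported_mono (fun i (hi : i < k) => hi.ne) (qbar_mem_supported A k)) (one_mem _)
  induction g using MvPolynomial.induction_on' with
  | monomial d c =>
    rw [sub_mul, map_sub, mul_assoc, divDiff_mul A k hq, sq, mul_assoc,
      divDiff_X_mul_monomial]
    have h : (X k : MvPolynomial (Fin m) ℤ) * monomial d c =
        monomial (Finsupp.single k 1 + d) c := by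
      rw [X, monomial_mul, one_mul]
    rw [h, divDiff_X_mul_monomial]
    simp only [Finsupp.erase_add, Finsupp.erase_single, zero_add, Finsupp.add_apply,
      Finsupp.single_eq_same]
    ring
  | add p q hp hq => rw [mul_add, map_add, hp, hq, add_zero]

lemma divDiff_mem_pow_idealOfVars {m : ℕ} (A : Fin m → Fin m → ℤ) (k : Fin m) (n : ℕ)
    {f : MvPolynomial (Fin m) ℤ} (hf : f ∈ idealOfVars (Fin m) ℤ ^ (n + 1)) :
    divDiff A k f ∈ idealOfVars (Fin m) ℤ ^ n := by
  rw [mem_pow_idealOfVars_iff] at hf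
  rw [f.as_sum, map_sum]
  refine Ideal.sum_mem _ fun d hd => ?_
  rw [divDiff_monomial]
  split_ifs with h0
  · exact zero_mem _
  · have hdeg : d.degree = d k + (d.erase k).degree := by
      conv_lhs => rw [← Finsupp.single_add_erase k d, map_add, Finsupp.degree_single]
    have hn := hf d hd
    have h1 : monomial (d.erase k) (coeff d f) ∈
        idealOfVars (Fin m) ℤ ^ (d.erase k).degree := by
      rw [mem_pow_idealOfVars_iff']
      intro e he
      rw [coeff_monomial, if_neg]
      rintro rfl
      exact lt_irrefl _ he
    have h2 := Ideal.mul_mem_mul h1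
      (Ideal.pow_mem_pow (qbar_sub_one_mem_idealOfVars A k) (d k - 1))
    rw [← pow_add] at h2
    exact Ideal.pow_le_pow_right (by lia) h2

lemma divDiff_sub_Dop_mem_pow_idealOfVars {m : ℕ} (A : Fin m → Fin m → ℤ) (k : Fin m)
    (f : MvPolynomial (Fin m) ℤ) :
    divDiff A k f - Dop A k f ∈ idealOfVars (Fin m) ℤ ^ ((k : ℕ) + 1) := by
  set S := ∑ n ∈ Finset.Icc 1 ((k : ℕ) + 1), coeffOf k n f * (qbar A k - 1) ^ (n - 1) with hS
  have hsum : S = ∑ d ∈ f.support, if d k ∈ Finset.Icc 1 ((k : ℕ) + 1) then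
      monomial (d.erase k) (coeff d f) * (qbar A k - 1) ^ (d k - 1) else 0 := by
    simp only [hS, coeffOf, Finset.sum_filter, Finset.sum_mul]
    rw [Finset.sum_comm]
    refine Finset.sum_congr rfl fun d _ => ?_
    simp only [ite_mul, zero_mul]
    rw [Finset.sum_ite_eq]
  have hdiff : divDiff A k f - S ∈ idealOfVars (Fin m) ℤ ^ ((k : ℕ) + 1) := by
    have hE : divDiff A k f = ∑ d ∈ f.support, divDiff A k (monomial d (coeff d f)) := by
      conv_lhs => rw [f.as_sum, map_sum]
    rw [hsum, hE, ← Finset.sum_sub_distrib]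
    refine Ideal.sum_mem _ fun d _ => ?_
    rw [divDiff_monomial]
    by_cases h0 : d k = 0
    · simp [h0]
    · rw [if_neg h0]
      split_ifs with h
      · simp
      · rw [Finset.mem_Icc] at h
        rw [sub_zero]
        exact Ideal.mul_mem_left _ _ (Ideal.pow_le_pow_right (by lia)
          (Ideal.pow_mem_pow (qbar_sub_one_mem_idealOfVars A k) (d k - 1)))
  have := add_mem hdiff (sub_trunc_mem_pow_idealOfVars k S)
  rwa [sub_add_sub_cancel] at this

/-- The functional `f ↦ (D₀ ∘ ⋯ ∘ D_{j-1}) f` built from the untruncated operators, followed by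
the constant coefficient. -/
noncomputable def topCoeff {m : ℕ} (A : Fin m → Fin m → ℤ) :
    ℕ → MvPolynomial (Fin m) ℤ →ₗ[ℤ] ℤ
  | 0 => lcoeff ℤ 0
  | j + 1 => if h : j < m then topCoeff A j ∘ₗ divDiff A ⟨j, h⟩ else topCoeff A j

lemma topCoeff_succ {m : ℕ} (A : Fin m → Fin m → ℤ) {j : ℕ} (h : j < m)
    (f : MvPolynomial (Fin m) ℤ) :
    topCoeff A (j + 1) f = topCoeff A j (divDiff A ⟨j, h⟩ f) := by
  rw [topCoeff, dif_pos h, LinearMap.comp_apply]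

lemma topCoeff_eq_zero_of_mem_pow_idealOfVars {m : ℕ} (A : Fin m → Fin m → ℤ) {j : ℕ}
    (hj : j ≤ m) {f : MvPolynomial (Fin m) ℤ} (hf : f ∈ idealOfVars (Fin m) ℤ ^ (j + 1)) :
    topCoeff A j f = 0 := by
  induction j generalizing f with
  | zero => exact (mem_pow_idealOfVars_iff' _ _).mp hf 0 (by simp)
  | succ j ih =>
    rw [topCoeff_succ A hj]
    exact ih (Nat.le_of_succ_le hj) (divDiff_mem_pow_idealOfVars A _ _ hf)

lemma coeff_zero_DeltaAux {m : ℕ} (A : Fin m → Fin m → ℤ) {j : ℕ} (hj : j ≤ m)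
    (f : MvPolynomial (Fin m) ℤ) : coeff 0 (DeltaAux A j f) = topCoeff A j f := by
  induction j generalizing f with
  | zero => rfl
  | succ j ih =>
    have hjm : j < m := hj
    rw [DeltaAux, dif_pos hjm, ih hjm.le, topCoeff_succ A hjm, eq_comm, ← sub_eq_zero, ← map_sub]
    exact topCoeff_eq_zero_of_mem_pow_idealOfVars A hjm.le
      (divDiff_sub_Dop_mem_pow_idealOfVars A ⟨j, hjm⟩ f)

lemma topCoeff_relation_mul {m : ℕ} (A : Fin m → Fin m → ℤ) (k : Fin m) {j : ℕ}
    (hkj : (k : ℕ) < j) (hj : j ≤ m) (g : MvPolynomial (Fin m) ℤ) :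
    topCoeff A j ((X k ^ 2 - (qbar A k - 1) * X k) * g) = 0 := by
  induction j generalizing g with
  | zero => exact absurd hkj (Nat.not_lt_zero _)
  | succ j ih =>
    have hjm : j < m := hj
    rw [topCoeff_succ A hjm]
    rcases Nat.lt_succ_iff_lt_or_eq.mp hkj with h | h
    · have hX : (X k : MvPolynomial (Fin m) ℤ) ∈ supported ℤ {(⟨j, hjm⟩ : Fin m)}ᶜ :=
        X_mem_supported.mpr (Fin.ne_of_lt h)
      have hq : qbar A k ∈ supported ℤ {(⟨j, hjm⟩ : Fin m)}ᶜ :=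
        supported_mono (fun i (hi : i < k) => Fin.ne_of_lt (lt_trans hi h))
          (qbar_mem_supported A k)
      rw [divDiff_mul A _ (sub_mem (pow_mem hX 2) (mul_mem (sub_mem hq (one_mem _)) hX))]
      exact ih h hjm.le _
    · obtain rfl : k = ⟨j, hjm⟩ := Fin.ext h
      rw [divDiff_mul_relation, map_zero]

lemma topCoeff_eq_zero_of_mem_relIdeal {m : ℕ} (A : Fin m → Fin m → ℤ)
    {f : MvPolynomial (Fin m) ℤ} (hf : f ∈ relIdeal A) : topCoeff A m f = 0 := by
  obtain ⟨a, rfl⟩ := (Ideal.mem_span_range_iff_exists_fun).mp hf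
  rw [map_sum]
  refine Finset.sum_eq_zero fun k _ => ?_
  rw [mul_comm]
  exact topCoeff_relation_mul A k k.2 le_rfl _

lemma topCoeff_prod_X {m : ℕ} (A : Fin m → Fin m → ℤ) {j : ℕ} (hj : j ≤ m)
    (I : Finset (Fin m)) (hI : ∀ i ∈ I, (i : ℕ) < j) :
    topCoeff A j (∏ i ∈ I, X i) = if ∀ i : Fin m, (i : ℕ) < j → i ∈ I then 1 else 0 := by
  induction j generalizing I with
  | zero =>
    obtain rfl : I = ∅ := Finset.eq_empty_of_forall_notMem fun i hi => Nat.not_lt_zero _ (hI i hi)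
    simp [topCoeff]
  | succ j ih =>
    have hjm : j < m := hj
    rw [topCoeff_succ A hjm]
    by_cases hmem : (⟨j, hjm⟩ : Fin m) ∈ I
    · have hs : (∏ i ∈ I.erase ⟨j, hjm⟩, X i : MvPolynomial (Fin m) ℤ) ∈
          supported ℤ {(⟨j, hjm⟩ : Fin m)}ᶜ :=
        Subalgebra.prod_mem _ fun i hi => X_mem_supported.mpr (Finset.ne_of_mem_erase hi)
      rw [← Finset.mul_prod_erase I _ hmem, divDiff_X_mul A _ hs, ih hjm.le]
      · congr 1
        simp only [Finset.mem_erase, eq_iff_iff]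
        constructor
        · intro h i hi
          rcases Nat.lt_succ_iff_lt_or_eq.mp hi with h' | h'
          · exact (h i h').2
          · rwa [show i = ⟨j, hjm⟩ from Fin.ext h']
        · exact fun h i hi => ⟨Fin.ne_of_lt hi, h i (Nat.lt_succ_of_lt hi)⟩
      · intro i hi
        rw [Finset.mem_erase] at hi
        exact lt_of_le_of_ne (Nat.lt_succ_iff.mp (hI i hi.2)) fun h => hi.1 (Fin.ext h)
    · have hs : (∏ i ∈ I, X i : MvPolynomial (Fin m) ℤ) ∈ supported ℤ {(⟨j, hjm⟩ : Fin m)}ᶜ :=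
        Subalgebra.prod_mem _ fun i hi => X_mem_supported.mpr fun h =>
          hmem (by rwa [Set.mem_singleton_iff.mp h] at hi)
      rw [divDiff_eq_zero A _ hs, map_zero, if_neg]
      exact fun h => hmem (h _ (Nat.lt_succ_self j))

/-- If the image of `f` in `B_A` is written in its unique expansion
`Σ_I a_I(f)·y_I`, then the top coefficient satisfies
`a_{{1,…,m}}(f) = Δ_A(f_{(m)})`. -/
theorem stmt7 {m : ℕ} (hm : 0 < m) (A : Fin m → Fin m → ℤ)
    (hA : ∀ i j : Fin m, j ≤ i → A i j = 0)
    (f : MvPolynomial (Fin m) ℤ) (c : Finset (Fin m) → ℤ)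
    (hc : Ideal.Quotient.mk (relIdeal A) f = ∑ I : Finset (Fin m), c I • yI A I) :
    c Finset.univ = Delta A (trunc m f) := by
  have hmem : f - ∑ I : Finset (Fin m), c I • ∏ i ∈ I, X i ∈ relIdeal A := by
    rw [← Ideal.Quotient.eq, hc, map_sum]
    exact Finset.sum_congr rfl fun I _ => (map_zsmul (Ideal.Quotient.mk (relIdeal A)) _ _).symm
  have hf : topCoeff A m f = c Finset.univ := by
    have h0 := topCoeff_eq_zero_of_mem_relIdeal A hmem
    rw [map_sub, sub_eq_zero] at h0
    rw [h0, map_sum, Finset.sum_eq_single Finset.univ]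
    · rw [map_smul, topCoeff_prod_X A le_rfl _ fun i _ => i.2]
      simp
    · intro I _ hI
      rw [map_smul, topCoeff_prod_X A le_rfl _ fun i _ => i.2, if_neg, smul_zero]
      exact fun h => hI (Finset.eq_univ_of_forall fun i => h i i.2)
    · simp
  rw [Delta, coeff_zero_DeltaAux A le_rfl, ← hf, ← sub_eq_zero, ← map_sub]
  exact topCoeff_eq_zero_of_mem_pow_idealOfVars A le_rfl (sub_trunc_mem_pow_idealOfVars m f)
end
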